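/- Let n > 1 be an integer, let φ denote the Euler totient function, let d = gcd(n^{φ(n)} - 1, φ(n)), and let m = ∏_{p | d} p^{v_p(n^{φ(n)} - 1)}, the product over primes p dividing d. If cosocle(m) > rad(n), then (1, n^{φ(n)·k} - 1, n^{φ(n)·k}) is an abc triple for each positive integer k. -/

import Mathlib

open scoped Classical

/-- The radical of a natural number: the product of its distinct prime factors. -/
def rad (n : ℕ) : ℕ := ∏ p ∈ n.primeFactors, p

/-- The cosocle of a natural number: `n / rad n`. -/
def cosocle (n : ℕ) : ℕ := n / rad n

/-- `(a, b, c)` is an abc triple: `a, b, c` are relatively prime positive integers with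
`a + b = c` and `rad (a*b*c) < c`. -/
def IsABCTriple (a b c : ℕ) : Prop :=
  0 < a ∧ 0 < b ∧ 0 < c ∧ a + b = c ∧
    Nat.Coprime a b ∧ Nat.Coprime a c ∧ Nat.Coprime b c ∧ rad (a * b * c) < c

/-!
Passing from a divisor `m` of `n ^ e - 1` to its multiple `B = n ^ (e * k) - 1` can only enlarge the
cosocle, so `rad n ≤ cosocle m` gives `rad n ≤ cosocle B`. Therefore
`rad (B * n ^ (e * k)) ≤ rad B * rad n ≤ rad B * cosocle B = B < n ^ (e * k)`.
-/

section Radical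

open UniqueFactorizationMonoid

theorem rad_eq_radical (n : ℕ) : rad n = radical n :=
  Nat.radical_eq_prod_primeFactors.symm

theorem rad_pos (n : ℕ) : 0 < rad n := by
  simpa only [rad_eq_radical] using Nat.radical_pos n

theorem rad_one : rad 1 = 1 := by
  rw [rad_eq_radical, radical_one]

theorem rad_dvd_self (n : ℕ) : rad n ∣ n := by
  simpa only [rad_eq_radical] using radical_dvd_self

theorem rad_pow (n : ℕ) {k : ℕ} (hk : k ≠ 0) : rad (n ^ k) = rad n := by
  simpa only [rad_eq_radical] using radical_pow n hk

theorem rad_mul_dvd (a b : ℕ) : rad (a * b) ∣ rad a * rad b := by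
  simpa only [rad_eq_radical] using radical_mul_dvd

end Radical

theorem rad_mul_le (a b : ℕ) : rad (a * b) ≤ rad a * rad b :=
  Nat.le_of_dvd (Nat.mul_pos (rad_pos a) (rad_pos b)) (rad_mul_dvd a b)

theorem rad_mul_cosocle (n : ℕ) : rad n * cosocle n = n :=
  Nat.mul_div_cancel' (rad_dvd_self n)

theorem cosocle_pos {n : ℕ} (hn : 0 < n) : 0 < cosocle n := by
  rw [← rad_mul_cosocle n] at hn
  exact Nat.pos_of_mul_pos_left hn

theorem cosocle_dvd_cosocle {m n : ℕ} (h : m ∣ n) : cosocle m ∣ cosocle n := by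
  obtain ⟨q, rfl⟩ := h
  have rad_dvd : rad (m * q) ∣ rad m * q :=
    (rad_mul_dvd m q).trans (Nat.mul_dvd_mul_left _ (rad_dvd_self q))
  refine Nat.dvd_of_mul_dvd_mul_left (rad_pos (m * q)) ?_
  calc rad (m * q) * cosocle m ∣ rad m * q * cosocle m := Nat.mul_dvd_mul_right rad_dvd _
    _ = rad m * cosocle m * q := Nat.mul_right_comm _ _ _
    _ = rad (m * q) * cosocle (m * q) := by rw [rad_mul_cosocle, rad_mul_cosocle]

theorem prod_pow_padicValNat_dvd {s : Finset ℕ} (hs : ∀ p ∈ s, p.Prime) (N : ℕ) :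
    ∏ p ∈ s, p ^ padicValNat p N ∣ N :=
  Finset.prod_dvd_of_isRelPrime
    (fun p hp q hq hpq ↦ Nat.coprime_iff_isRelPrime.1
      (Nat.coprime_pow_primes _ _ (hs p hp) (hs q hq) hpq))
    fun _ _ ↦ pow_padicValNat_dvd

theorem IsABCTriple.of_rad_mul_rad_le_cosocle {a b c : ℕ} (ha : 0 < a) (hb : 0 < b)
    (habc : a + b = c) (hab : a.Coprime b) (h : rad a * rad c ≤ cosocle b) :
    IsABCTriple a b c := by
  subst habc
  refine ⟨ha, hb, by omega, rfl, hab, Nat.coprime_self_add_right.2 hab,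
    Nat.coprime_add_self_right.2 hab.symm, ?_⟩
  calc rad (a * b * (a + b)) ≤ rad (a * b) * rad (a + b) := rad_mul_le _ _
    _ ≤ rad a * rad b * rad (a + b) := Nat.mul_le_mul_right _ (rad_mul_le a b)
    _ = rad b * (rad a * rad (a + b)) := by ring
    _ ≤ rad b * cosocle b := Nat.mul_le_mul_left _ h
    _ = b := rad_mul_cosocle b
    _ < a + b := Nat.lt_add_of_pos_left ha

theorem IsABCTriple.one_pow_sub_one {n j : ℕ} (hn : 1 < n) (hj : j ≠ 0)
    (h : rad n ≤ cosocle (n ^ j - 1)) : IsABCTriple 1 (n ^ j - 1) (n ^ j) := by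
  have one_lt : 1 < n ^ j := Nat.one_lt_pow hj hn
  refine .of_rad_mul_rad_le_cosocle one_pos (Nat.sub_pos_of_lt one_lt)
    (Nat.add_sub_of_le one_lt.le) (Nat.coprime_one_left _) ?_
  rwa [rad_one, one_mul, rad_pow n hj]

theorem stmt_12_general {n e m : ℕ} (hn : 1 < n) (he : 0 < e) (hm : m ∣ n ^ e - 1)
    (hcos : rad n ≤ cosocle m) {k : ℕ} (hk : 0 < k) :
    IsABCTriple 1 (n ^ (e * k) - 1) (n ^ (e * k)) := by
  have hek : e * k ≠ 0 := (Nat.mul_pos he hk).ne'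
  have m_dvd : m ∣ n ^ (e * k) - 1 :=
    hm.trans (Nat.pow_sub_one_dvd_pow_sub_one n (Nat.dvd_mul_right e k))
  have pow_sub_one_pos : 0 < n ^ (e * k) - 1 := Nat.sub_pos_of_lt (Nat.one_lt_pow hek hn)
  exact .one_pow_sub_one hn hek
    (hcos.trans (Nat.le_of_dvd (cosocle_pos pow_sub_one_pos) (cosocle_dvd_cosocle m_dvd)))

theorem stmt_12 (n : ℕ) (hn : 1 < n)
    (d : ℕ) (hd : d = Nat.gcd (n ^ Nat.totient n - 1) (Nat.totient n))
    (m : ℕ)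
    (hm : m = ∏ p ∈ d.primeFactors, p ^ padicValNat p (n ^ Nat.totient n - 1))
    (hcos : rad n < cosocle m) :
    ∀ k : ℕ, 0 < k →
      IsABCTriple 1 (n ^ (Nat.totient n * k) - 1) (n ^ (Nat.totient n * k)) := by
  have hmN : m ∣ n ^ Nat.totient n - 1 :=
    hm ▸ prod_pow_padicValNat_dvd (fun _ ↦ Nat.prime_of_mem_primeFactors) _
  exact fun k hk ↦ stmt_12_general hn (Nat.totient_pos.2 (one_pos.trans hn)) hmN hcos.le hk
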